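/- Let X be a real Banach space failing the Radon–Nikodým property, i.e. there exist a nonempty bounded subset A of X and ε > 0 such that every nonempty slice of A has diameter at least ε. Then there exists an equivalent norm on X whose closed unit ball has no almost preserved extreme points; equivalently, there exists a bounded, closed, convex and symmetric (B = −B) subset B of X with 0 in its norm-interior such that ape(B) = ∅. -/

import Mathlib

/-!
A closed convex set `B` has no almost preserved extreme points as soon as every `x₀ ∈ B` has a weak
neighbourhood `U` for which `B` is the closed convex hull of `B \ U`, because then every nonempty
slice of `B` leaves `U`. The proof produces a ball with this property.

Failure of the Radon–Nikodým property gives a non-dentable set, which may be taken countable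
(`NonDentable.exists_countable`). Let `C` be its closed convex hull, and let `y` be a sequence whose
closure contains the closed span of `C`. A dropping argument in the spirit of Namioka's superlemma
shows that every slice of `C` contains a slice on which a single functional of norm at most one
stays above its value at a prescribed point by at least `δ` (`exists_escaping_subslice`). Iterating
along `y` gives a finitely branching tree of nested slices: slices of level `k` escape from `y k`,
and each node carries a point which is, up to a summable error, a convex combination of the points
of its children. Passing to limits of averages over late generations makes these relations exact
and keeps each point in the closed convex hull of its slice (`exists_levels`). Hence the levels
`D m` satisfy `D m ⊆ conv (D (m + 1))`, and for each `k` finitely many functionals keep all levels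
`D m`, `m ≥ k`, away from `y k`.

The ball is the closed convex hull of all points `± t + z` with `t` in the tree and `‖z‖ ≤ r`, where
`δ = 5 * r`. Adding a small ball provides interior points in the possibly nonseparable space `X`,
and does no harm: every point of the resulting set is within `3 * r` of some `y k`, so it is still
escaped by all late levels, while late levels suffice to generate the ball (`ape_hull_eq_empty`).
-/

open Set Metric Topology Bornology

noncomputable section

/-- The weak topology σ(X, X*) on a normed space X. -/
def weakTop (X : Type*) [NormedAddCommGroup X] [NormedSpace ℝ X] : TopologicalSpace X :=
  TopologicalSpace.induced (fun (x : X) => (fun f : X →L[ℝ] ℝ => f x)) inferInstance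

/-- The slice of `C` determined by `f` and `α`. -/
def sliceOf {X : Type*} [NormedAddCommGroup X] [NormedSpace ℝ X]
    (C : Set X) (f : X →L[ℝ] ℝ) (α : ℝ) : Set X :=
  {x ∈ C | sSup ((fun y => f y) '' C) - α < f x}

/-- Almost preserved extreme points of `C`. -/
def ape {X : Type*} [NormedAddCommGroup X] [NormedSpace ℝ X] (C : Set X) : Set X :=
  {x ∈ C | ∀ U : Set X, IsOpen[weakTop X] U → x ∈ U →
    ∃ (f : X →L[ℝ] ℝ) (α : ℝ), 0 < α ∧ (sliceOf C f α).Nonempty ∧ sliceOf C f α ⊆ U}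

/-! ### Slices and non-dentability -/

section Hulls

variable {X : Type*} [NormedAddCommGroup X] [NormedSpace ℝ X]

lemma le_on_closed_hull {D : Set X} {g : X →L[ℝ] ℝ} {a : ℝ} (h : ∀ x ∈ D, g x ≤ a) :
    ∀ x ∈ closure (convexHull ℝ D), g x ≤ a := by
  intro x hx
  have h1 : convexHull ℝ D ⊆ {x | g x ≤ a} :=
    convexHull_min h (convex_halfSpace_le g.isLinear a)
  exact closure_minimal h1 (isClosed_le g.continuous continuous_const) hx

lemma exists_separation {D : Set X} {x : X} (hx : x ∉ closure (convexHull ℝ D)) :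
    ∃ (g : X →L[ℝ] ℝ) (a : ℝ), (∀ d ∈ D, g d ≤ a) ∧ a < g x := by
  obtain ⟨g, a, h1, h2⟩ :=
    geometric_hahn_banach_closed_point (convex_convexHull ℝ D).closure isClosed_closure hx
  exact ⟨g, a, fun d hd => (h1 d (subset_closure (subset_convexHull ℝ D hd))).le, h2⟩

/-- A point high in the slice `{a < g}` of `C` that lies in the closed convex hull of
`V ∪ (C \ slice)` is close to the convex hull of `V` alone: in a convex combination
approximating it, the part outside the slice has weight less than `θ` and may be dropped. -/
lemma exists_near_of_high {C V : Set X} {R : ℝ} (hR : ∀ x ∈ C, ‖x‖ ≤ R) (hC : Convex ℝ C)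
    (hV : V ⊆ C) {g : X →L[ℝ] ℝ} {a M : ℝ} (haM : a < M) (hM : ∀ x ∈ C, g x ≤ M) {p : X}
    (hp : p ∈ closure (convexHull ℝ (V ∪ {x ∈ C | g x ≤ a}))) {θ η : ℝ} (hθ : 0 < θ)
    (hθ1 : θ ≤ 1) (hgp : M - θ * (M - a) < g p) (hη : 0 < η) :
    ∃ v ∈ convexHull ℝ V, ‖p - v‖ < 2 * R * θ + η := by
  have hK : Convex ℝ {x ∈ C | g x ≤ a} := hC.inter (convex_halfSpace_le g.isLinear a)
  obtain ⟨q, ⟨hq1, hq2⟩, hq⟩ := mem_closure_iff.1 hp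
    ({q | M - θ * (M - a) < g q} ∩ Metric.ball p η)
    ((isOpen_lt continuous_const g.continuous).inter Metric.isOpen_ball)
    ⟨hgp, Metric.mem_ball_self hη⟩
  simp only [mem_ofPred_eq] at hq1
  rw [mem_ball_comm, mem_ball_iff_norm] at hq2
  have hθa : θ * (M - a) ≤ M - a := by nlinarith
  rcases V.eq_empty_or_nonempty with rfl | hVne
  · rw [empty_union, hK.convexHull_eq] at hq
    linarith [hq.2]
  have hR0 : 0 ≤ R := by
    obtain ⟨v, hv⟩ := hVne
    exact (norm_nonneg _).trans (hR v (hV hv))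
  rcases {x ∈ C | g x ≤ a}.eq_empty_or_nonempty with hKe | hKne
  · rw [hKe, union_empty] at hq
    exact ⟨q, hq, by nlinarith [mul_nonneg hR0 hθ.le]⟩
  rw [convexHull_union hVne hKne, hK.convexHull_eq, mem_convexJoin] at hq
  obtain ⟨v, hv, w, hw, s, t, hs, ht, hst, rfl⟩ := hq
  have hvC : v ∈ C := convexHull_min hV hC hv
  refine ⟨v, hv, ?_⟩
  have htθ : t < θ := by
    have h1 := hM v hvC
    have h2 := hw.2
    simp only [map_add, map_smul, smul_eq_mul] at hq1
    have h3 : s * g v ≤ s * M := mul_le_mul_of_nonneg_left h1 hs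
    have h4 : t * g w ≤ t * a := mul_le_mul_of_nonneg_left h2 ht
    have h5 : s = 1 - t := by linarith
    subst h5
    nlinarith
  have h6 : s • v + t • w - v = t • (w - v) := by
    have h5 : s = 1 - t := by linarith
    subst h5
    module
  have h7 : ‖w - v‖ ≤ 2 * R := by
    linarith [norm_sub_le w v, hR w hw.1, hR v hvC]
  have h8 : ‖s • v + t • w - v‖ ≤ θ * (2 * R) := by
    rw [h6, norm_smul, Real.norm_of_nonneg ht]
    exact mul_le_mul htθ.le h7 (norm_nonneg _) hθ.le
  have h9 := norm_sub_le_norm_sub_add_norm_sub p (s • v + t • w) v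
  linarith

/-- Every nonempty slice of `A`, written `{x ∈ A | a < g x}`, leaves every closed ball of
radius `ε`. -/
def NonDentable (A : Set X) (ε : ℝ) : Prop :=
  ∀ (g : X →L[ℝ] ℝ) (a : ℝ) (y : X), (∃ x ∈ A, a < g x) → ∃ x ∈ A, a < g x ∧ ε < ‖x - y‖

lemma NonDentable.closedHull {A : Set X} {ε : ℝ} (h : NonDentable A ε) :
    NonDentable (closure (convexHull ℝ A)) ε := by
  rintro g a y ⟨x, hx, hax⟩
  have h1 : ∃ x ∈ A, a < g x := by
    by_contra! hcon
    exact absurd (le_on_closed_hull hcon x hx) (not_le.2 hax)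
  obtain ⟨z, hz, h2⟩ := h g a y h1
  exact ⟨z, subset_closure (subset_convexHull ℝ A hz), h2⟩

lemma nonDentable_of_diam {A : Set X} (hA : Bornology.IsBounded A) {ε : ℝ} (hε : 0 < ε)
    (h : ∀ (f : X →L[ℝ] ℝ) (α : ℝ), 0 < α → (sliceOf A f α).Nonempty →
        ε ≤ Metric.diam (sliceOf A f α)) : NonDentable A (ε / 4) := by
  rintro g a y ⟨x, hx, hax⟩
  have hbdd : BddAbove ((fun y => g y) '' A) := by
    have := (g.lipschitz.isBounded_image hA)
    exact this.bddAbove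
  have hle : g x ≤ sSup ((fun y => g y) '' A) := le_csSup hbdd ⟨x, hx, rfl⟩
  have hs : sliceOf A g (sSup ((fun y => g y) '' A) - a) = {x ∈ A | a < g x} := by
    simp [sliceOf]
  have h1 := h g (sSup ((fun y => g y) '' A) - a) (by linarith) (by rw [hs]; exact ⟨x, hx, hax⟩)
  rw [hs] at h1
  by_contra! hcon
  have h2 : Metric.diam {x ∈ A | a < g x} ≤ ε / 2 := by
    refine Metric.diam_le_of_forall_dist_le (by linarith) ?_
    rintro u ⟨hu, hau⟩ v ⟨hv, hav⟩
    have h3 := hcon u hu hau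
    have h4 := hcon v hv hav
    rw [← dist_eq_norm] at h3 h4
    linarith [dist_triangle_right u v y]
  linarith

/-- Non-dentability is witnessed by a countable subset: each point of `A` lies in the closed
convex hull of a countable set of points of `A` far away from it, and it suffices to close a
singleton under the choice of such countable sets. -/
lemma NonDentable.exists_countable {A : Set X} {ε : ℝ} (hne : A.Nonempty)
    (h : NonDentable A ε) :
    ∃ A' ⊆ A, A'.Countable ∧ A'.Nonempty ∧ NonDentable A' (ε / 2) := by
  have key : ∀ x : X, ∃ c : ℕ → X, x ∈ A →
      (∀ n, c n ∈ A ∧ ε < ‖c n - x‖) ∧ x ∈ closure (convexHull ℝ (range c)) := by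
    intro x
    by_cases hxA : x ∈ A
    swap
    · exact ⟨fun _ => x, fun h => absurd h hxA⟩
    set D : Set X := {z ∈ A | ε < ‖z - x‖} with hD
    have hx : x ∈ closure (convexHull ℝ D) := by
      by_contra hcon
      obtain ⟨g, a, h1, h2⟩ := exists_separation hcon
      obtain ⟨z, hz, h3, h4⟩ := h g a x ⟨x, hxA, h2⟩
      exact absurd (h1 z ⟨hz, h4⟩) (not_le.2 h3)
    have hfin : ∀ n : ℕ, ∃ t : Finset X, (t : Set X) ⊆ D ∧
        ∃ q ∈ convexHull ℝ (t : Set X), dist x q < 1 / ((n : ℝ) + 1) := by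
      intro n
      obtain ⟨q, hq, hd⟩ := Metric.mem_closure_iff.1 hx (1 / ((n : ℝ) + 1)) (by positivity)
      rw [convexHull_eq_union_convexHull_finite_subsets] at hq
      simp only [mem_iUnion] at hq
      obtain ⟨t, ht, hq⟩ := hq
      exact ⟨t, ht, q, hq, hd⟩
    choose t ht q hq hqd using hfin
    have hcl : x ∈ closure (convexHull ℝ (⋃ n, (t n : Set X))) := by
      rw [Metric.mem_closure_iff]
      intro e he
      obtain ⟨n, hn⟩ := exists_nat_one_div_lt he
      exact ⟨q n, convexHull_mono (subset_iUnion (fun n => (t n : Set X)) n) (hq n),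
        (hqd n).trans hn⟩
    have hcount : (⋃ n, (t n : Set X)).Countable :=
      countable_iUnion fun n => (t n).countable_toSet
    have hnonempty : (⋃ n, (t n : Set X)).Nonempty := by
      rw [← convexHull_nonempty_iff (𝕜 := ℝ), ← closure_nonempty_iff]
      exact ⟨x, hcl⟩
    obtain ⟨c, hc⟩ := hcount.exists_eq_range hnonempty
    refine ⟨c, fun _ => ⟨fun n => ?_, hc ▸ hcl⟩⟩
    have : c n ∈ ⋃ n, (t n : Set X) := hc ▸ mem_range_self n
    obtain ⟨m, hm⟩ := mem_iUnion.1 this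
    exact ht m hm
  choose c hc using key
  obtain ⟨x₀, hx₀⟩ := hne
  let φ : List ℕ → X := fun l => l.foldr (fun n x => c x n) x₀
  have hφ : ∀ l, φ l ∈ A := by
    intro l
    induction l with
    | nil => exact hx₀
    | cons n l ih => exact ((hc (φ l) ih).1 n).1
  refine ⟨range φ, ?_, countable_range φ, range_nonempty φ, ?_⟩
  · rintro _ ⟨l, rfl⟩
    exact hφ l
  rintro g a y ⟨_, ⟨l, rfl⟩, hl⟩
  obtain ⟨n, hn⟩ : ∃ n, a < g (c (φ l) n) := by
    by_contra! hcon
    exact absurd (le_on_closed_hull (by rintro _ ⟨n, rfl⟩; exact hcon n) _ (hc (φ l) (hφ l)).2)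
      (not_le.2 hl)
  have hfar := ((hc (φ l) (hφ l)).1 n).2
  by_cases hy : ε / 2 < ‖φ l - y‖
  · exact ⟨φ l, ⟨l, rfl⟩, hl, hy⟩
  · refine ⟨c (φ l) n, ⟨n :: l, rfl⟩, hn, ?_⟩
    have := norm_sub_le_norm_sub_add_norm_sub (c (φ l) n) y (φ l)
    rw [norm_sub_rev y] at this
    linarith

/-- In a bounded non-dentable convex set, every nonempty slice contains a nonempty slice on which
a single functional in the dual unit ball keeps the points away from a prescribed point `y`. If
not, `C` would be the closed convex hull of the complement of the slice and of a small ball, and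
the highest points of the slice would all be close to that ball. -/
lemma exists_escaping_subslice {C : Set X} {R δ : ℝ} (hR : ∀ x ∈ C, ‖x‖ ≤ R)
    (hC : Convex ℝ C) (hδ : 0 < δ) (hnd : NonDentable C (3 * δ)) (g : X →L[ℝ] ℝ) (a : ℝ)
    (hne : ∃ x ∈ C, a < g x) (y : X) :
    ∃ (g' : X →L[ℝ] ℝ) (a' : ℝ) (f : X →L[ℝ] ℝ), (∃ x ∈ C, a' < g' x) ∧
      (∀ x ∈ C, a' < g' x → a < g x) ∧ ‖f‖ ≤ 1 ∧ ∀ x ∈ C, a' < g' x → f y + δ ≤ f x := by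
  obtain ⟨x₀, hx₀, hax₀⟩ := hne
  have hR0 : 0 ≤ R := (norm_nonneg _).trans (hR x₀ hx₀)
  set K₁ : Set X := C ∩ Metric.closedBall y (2 * δ) with hK₁
  have hK₁c : Convex ℝ K₁ := hC.inter (convex_closedBall y _)
  have hnot : ¬ C ⊆ closure (convexHull ℝ (K₁ ∪ {x ∈ C | g x ≤ a})) := by
    intro hsub
    have hbdd : BddAbove ((fun x => g x) '' C) := by
      refine ⟨‖g‖ * R, ?_⟩
      rintro _ ⟨x, hx, rfl⟩
      exact (le_abs_self _).trans ((g.le_opNorm x).trans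
        (mul_le_mul_of_nonneg_left (hR x hx) (norm_nonneg _)))
    set M := sSup ((fun x => g x) '' C) with hMdef
    have hM : ∀ x ∈ C, g x ≤ M := fun x hx => le_csSup hbdd ⟨x, hx, rfl⟩
    have haM : a < M := hax₀.trans_le (hM x₀ hx₀)
    set θ : ℝ := min 1 (δ / (2 * (2 * R + 1))) with hθdef
    have hθ : 0 < θ := lt_min one_pos (by positivity)
    have hθR : 2 * R * θ ≤ δ / 2 := by
      have h1 : θ ≤ δ / (2 * (2 * R + 1)) := min_le_right _ _
      rw [le_div_iff₀ (by positivity)] at h1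
      nlinarith
    obtain ⟨_, ⟨x₁, hx₁, rfl⟩, h1⟩ := exists_lt_of_lt_csSup (b := M - θ * (M - a))
      (show ((fun x => g x) '' C).Nonempty from ⟨_, x₀, hx₀, rfl⟩)
      (by have := mul_pos hθ (sub_pos.2 haM); linarith)
    obtain ⟨p, hp, hgp, hpy⟩ := hnd g (M - θ * (M - a)) y ⟨x₁, hx₁, h1⟩
    obtain ⟨v, hv, hpv⟩ := exists_near_of_high hR hC inter_subset_left haM hM (hsub hp) hθ
      (min_le_left _ _) hgp (half_pos hδ)
    rw [hK₁c.convexHull_eq] at hv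
    have h2 : ‖v - y‖ ≤ 2 * δ := mem_closedBall_iff_norm.1 hv.2
    have := norm_sub_le_norm_sub_add_norm_sub p v y
    linarith
  obtain ⟨x₁, hx₁, hx₁n⟩ := not_subset.1 hnot
  obtain ⟨g', a', hsep, hx₁a⟩ := exists_separation hx₁n
  obtain ⟨f, u, hf1, hf2⟩ := geometric_hahn_banach_open
    (s := Metric.ball y (2 * δ)) (t := {x ∈ C | a' < g' x}) (convex_ball y _) Metric.isOpen_ball
    (hC.inter (convex_halfSpace_gt g'.isLinear a')) (by
      rw [Set.disjoint_left]
      rintro x hxb ⟨hxC, hxa⟩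
      exact absurd (hsep x (Or.inl ⟨hxC, Metric.ball_subset_closedBall hxb⟩)) (not_le.2 hxa))
  have hfy : f y < u := hf1 y (Metric.mem_ball_self (by linarith))
  have hfn : ‖f‖ ≤ (u - f y) / δ := by
    refine f.opNorm_le_of_unit_norm (div_nonneg (by linarith) hδ.le) fun x hx => ?_
    have hb : ∀ s : ℝ, |s| = δ → f y + s * f x < u := by
      intro s hs
      have := hf1 (y + s • x) (by
        rw [mem_ball_iff_norm, add_sub_cancel_left, norm_smul, hx, Real.norm_eq_abs, hs]
        linarith)
      simpa using this
    have h1 := hb δ (abs_of_pos hδ)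
    have h2 := hb (-δ) (by rw [abs_neg, abs_of_pos hδ])
    rw [Real.norm_eq_abs, le_div_iff₀ hδ]
    rcases abs_cases (f x) with ⟨h, _⟩ | ⟨h, _⟩ <;> rw [h] <;> linarith
  have hfpos : 0 < ‖f‖ := by
    rw [norm_pos_iff]
    rintro rfl
    have := hf2 x₁ ⟨hx₁, hx₁a⟩
    simp at this hfy
    linarith
  refine ⟨g', a', ‖f‖⁻¹ • f, ⟨x₁, hx₁, hx₁a⟩, fun x hx hxa => ?_, ?_, fun x hx hxa => ?_⟩
  · by_contra! hcon
    exact absurd (hsep x (Or.inr ⟨hx, hcon⟩)) (not_le.2 hxa)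
  · rw [norm_smul, norm_inv, norm_norm, inv_mul_cancel₀ hfpos.ne']
  · have h1 := hf2 x ⟨hx, hxa⟩
    rw [le_div_iff₀ hδ] at hfn
    have h2 : ‖f‖ * δ ≤ f x - f y := by linarith
    have h3 : δ ≤ ‖f‖⁻¹ * (f x - f y) := by
      rw [inv_mul_eq_div, le_div_iff₀ hfpos]
      linarith
    simp only [smul_apply, smul_eq_mul]
    linarith [mul_sub ‖f‖⁻¹ (f x) (f y)]

end Hulls

/-! ### A tree of nested slices -/

section Tree

variable {X : Type*} [NormedAddCommGroup X] [NormedSpace ℝ X]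

/-- A node of level `k`: a slice `{x ∈ C | a < g x}` of `C`, on which the functional `f` of norm
at most one stays above `f (y k) + δ`, together with a point `p` of `C` which is so high in that
slice that at most the proportion `1 / 2 ^ (k + 1)` of the height `M - a` lies above it. -/
structure SliceNode (C : Set X) (y : ℕ → X) (δ : ℝ) (k : ℕ) where
  g : X →L[ℝ] ℝ
  a : ℝ
  M : ℝ
  p : X
  f : X →L[ℝ] ℝ
  a_lt : a < M
  le_M : ∀ x ∈ C, g x ≤ M
  p_mem : p ∈ C
  high : M - 1 / 2 / 2 ^ k * (M - a) < g p
  norm_f : ‖f‖ ≤ 1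
  escape : ∀ x ∈ C, a < g x → f (y k) + δ ≤ f x

/-- The slice carried by a node. -/
def SliceNode.slice {C : Set X} {y : ℕ → X} {δ : ℝ} {k : ℕ} (N : SliceNode C y δ k) : Set X :=
  {x ∈ C | N.a < N.g x}

lemma half_pow_le_one (k : ℕ) : (1 : ℝ) / 2 / 2 ^ k ≤ 1 := by
  rw [div_le_one (by positivity)]
  linarith [one_le_pow₀ (M₀ := ℝ) (a := 2) (by norm_num) (n := k)]

lemma SliceNode.p_mem_slice {C : Set X} {y : ℕ → X} {δ : ℝ} {k : ℕ} (N : SliceNode C y δ k) :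
    N.p ∈ N.slice := by
  refine ⟨N.p_mem, ?_⟩
  have h1 := N.high
  have h2 := half_pow_le_one k
  have h3 := N.a_lt
  nlinarith

lemma exists_sliceNode {C : Set X} {R δ : ℝ} (hR : ∀ x ∈ C, ‖x‖ ≤ R)
    (hC : Convex ℝ C) (hδ : 0 < δ) (hnd : NonDentable C (3 * δ)) (y : ℕ → X) (k : ℕ)
    (g : X →L[ℝ] ℝ) (a : ℝ) (hne : ∃ x ∈ C, a < g x) :
    ∃ N : SliceNode C y δ k, N.slice ⊆ {x ∈ C | a < g x} := by
  obtain ⟨g', a', f, ⟨x₀, hx₀, hax₀⟩, hsub, hf, hfy⟩ :=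
    exists_escaping_subslice hR hC hδ hnd g a hne (y k)
  have hbdd : BddAbove ((fun x => g' x) '' C) := by
    refine ⟨‖g'‖ * R, ?_⟩
    rintro _ ⟨x, hx, rfl⟩
    exact (le_abs_self _).trans ((g'.le_opNorm x).trans
      (mul_le_mul_of_nonneg_left (hR x hx) (norm_nonneg _)))
  set M := sSup ((fun x => g' x) '' C) with hMdef
  have hM : ∀ x ∈ C, g' x ≤ M := fun x hx => le_csSup hbdd ⟨x, hx, rfl⟩
  have haM : a' < M := hax₀.trans_le (hM x₀ hx₀)
  obtain ⟨_, ⟨p, hp, rfl⟩, h1⟩ := exists_lt_of_lt_csSup (b := M - 1 / 2 / 2 ^ k * (M - a'))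
    (show ((fun x => g' x) '' C).Nonempty from ⟨_, x₀, hx₀, rfl⟩)
    (by
      have := mul_pos (show (0 : ℝ) < 1 / 2 / 2 ^ k by positivity) (sub_pos.2 haM)
      linarith)
  exact ⟨⟨g', a', M, p, f, haM, hM, hp, h1, hf, hfy⟩, fun x hx => ⟨hx.1, hsub x hx.1 hx.2⟩⟩

/-- The point of a node is, up to a geometrically small error, a convex combination of points of
nodes of the next level whose slices lie inside the slice of the given node. -/
lemma SliceNode.exists_children {C : Set X} {R δ : ℝ} (hR : ∀ x ∈ C, ‖x‖ ≤ R)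
    (hC : Convex ℝ C) (hδ : 0 < δ) (hnd : NonDentable C (3 * δ)) {y : ℕ → X} {k : ℕ}
    (N : SliceNode C y δ k) :
    ∃ (n : ℕ) (w : Fin n → ℝ) (c : Fin n → SliceNode C y δ (k + 1)),
      (∀ i, 0 ≤ w i) ∧ ∑ i, w i = 1 ∧ (∀ i, (c i).slice ⊆ N.slice) ∧
      ‖N.p - ∑ i, w i • (c i).p‖ ≤ (2 * R + 1) / 2 / 2 ^ k := by
  set V : Set X := {v | ∃ N' : SliceNode C y δ (k + 1), N'.slice ⊆ N.slice ∧ N'.p = v} with hV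
  have hVC : V ⊆ C := by
    rintro _ ⟨N', -, rfl⟩
    exact N'.p_mem
  have hp : N.p ∈ closure (convexHull ℝ (V ∪ {x ∈ C | N.g x ≤ N.a})) := by
    by_contra hcon
    obtain ⟨g, a, h1, h2⟩ := exists_separation hcon
    obtain ⟨N', hN'⟩ := exists_sliceNode hR hC hδ hnd y (k + 1) g a ⟨N.p, N.p_mem, h2⟩
    have h3 : N'.slice ⊆ N.slice := by
      intro x hx
      refine ⟨hx.1, ?_⟩
      by_contra! h4
      exact absurd (h1 x (Or.inr ⟨hx.1, h4⟩)) (not_le.2 (hN' hx).2)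
    exact absurd (h1 N'.p (Or.inl ⟨N', h3, rfl⟩)) (not_le.2 (hN' N'.p_mem_slice).2)
  have hθ : (0 : ℝ) < 1 / 2 / 2 ^ k := by positivity
  obtain ⟨v, hv, hpv⟩ := exists_near_of_high hR hC hVC N.a_lt N.le_M hp hθ
    (half_pow_le_one k) N.high hθ
  obtain ⟨ι, _, w, z, hw, hw1, hz, rfl⟩ := mem_convexHull_iff_exists_fintype.1 hv
  choose c hc hcz using hz
  let e := Fintype.equivFin ι
  refine ⟨Fintype.card ι, fun i => w (e.symm i), fun i => c (e.symm i), fun i => hw _, ?_,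
    fun i => hc _, ?_⟩
  · rw [← hw1]
    exact e.symm.sum_comp w
  · have : ∑ i, w (e.symm i) • (c (e.symm i)).p = ∑ i, w i • z i := by
      rw [← e.symm.sum_comp (fun i => w i • z i)]
      simp only [hcz]
    rw [this]
    refine hpv.le.trans (le_of_eq ?_)
    ring

/-- The sets `D m` are the levels of a tree: each is contained in the convex hull of the next,
and from level `k` on all points are kept away from `y k` by finitely many functionals.
The nodes form an approximate martingale; the exact one is obtained by replacing the point of a
node by the limit of its averages over later and later generations. -/
lemma exists_levels [CompleteSpace X] {C : Set X} {R δ : ℝ} (hCne : C.Nonempty)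
    (hR : ∀ x ∈ C, ‖x‖ ≤ R) (hC : Convex ℝ C) (hCcl : IsClosed C) (hδ : 0 < δ)
    (hnd : NonDentable C (3 * δ)) (y : ℕ → X) :
    ∃ D : ℕ → Set X, (∀ m, D m ⊆ C) ∧ (D 0).Nonempty ∧
      (∀ m, D m ⊆ convexHull ℝ (D (m + 1))) ∧
      ∀ k, ∃ F : Set (X →L[ℝ] ℝ), F.Finite ∧ (∀ f ∈ F, ‖f‖ ≤ 1) ∧
        ∀ m, k ≤ m → ∀ t ∈ D m, ∃ f ∈ F, f (y k) + δ ≤ f t := by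
  obtain ⟨x₀, hx₀⟩ := hCne
  obtain ⟨root, -⟩ := exists_sliceNode hR hC hδ hnd y 0 0 (-1) ⟨x₀, hx₀, by simp⟩
  choose n w c hw hw1 hc herr using
    fun (k : ℕ) (N : SliceNode C y δ k) => N.exists_children hR hC hδ hnd
  -- `q j k N` is the average of the points `p` over the `j`-th generation of descendants of `N`.
  let q : ℕ → (k : ℕ) → SliceNode C y δ k → X := fun j =>
    Nat.rec (fun _ N => N.p) (fun _ r k N => ∑ i, w k N i • r (k + 1) (c k N i)) j
  have q0 : ∀ k (N : SliceNode C y δ k), q 0 k N = N.p := fun _ _ => rfl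
  have qs : ∀ j k (N : SliceNode C y δ k),
      q (j + 1) k N = ∑ i, w k N i • q j (k + 1) (c k N i) := fun _ _ _ => rfl
  have hstep : ∀ j k (N : SliceNode C y δ k),
      ‖q j k N - q (j + 1) k N‖ ≤ (2 * R + 1) / 2 / 2 ^ (k + j) := by
    intro j
    induction j with
    | zero =>
      intro k N
      rw [qs, q0]
      simpa only [q0, add_zero] using herr k N
    | succ j ih =>
      intro k N
      rw [qs, qs (j + 1), ← Finset.sum_sub_distrib]
      have h1 : ∀ i, ‖w k N i • q j (k + 1) (c k N i) - w k N i • q (j + 1) (k + 1) (c k N i)‖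
          ≤ w k N i * ((2 * R + 1) / 2 / 2 ^ (k + (j + 1))) := by
        intro i
        rw [← smul_sub, norm_smul, Real.norm_of_nonneg (hw k N i)]
        refine mul_le_mul_of_nonneg_left ?_ (hw k N i)
        have := ih (k + 1) (c k N i)
        rwa [show k + 1 + j = k + (j + 1) by ring] at this
      refine (norm_sum_le_of_le _ fun i _ => h1 i).trans (le_of_eq ?_)
      rw [← Finset.sum_mul, hw1, one_mul]
  have hlim : ∀ k (N : SliceNode C y δ k), ∃ t, Filter.Tendsto (fun j => q j k N)
      Filter.atTop (𝓝 t) := by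
    intro k N
    refine cauchySeq_tendsto_of_complete
      (cauchySeq_of_le_geometric_two (C := (2 * R + 1) / 2 ^ k) fun j => ?_)
    rw [dist_eq_norm]
    refine (hstep j k N).trans (le_of_eq ?_)
    rw [pow_add]
    field_simp
  choose t ht using hlim
  have hts : ∀ k (N : SliceNode C y δ k), t k N = ∑ i, w k N i • t (k + 1) (c k N i) := by
    intro k N
    refine tendsto_nhds_unique ((Filter.tendsto_add_atTop_iff_nat 1).2 (ht k N)) ?_
    simp only [qs]
    exact tendsto_finsetSum _ fun i _ => (ht (k + 1) (c k N i)).const_smul (w k N i)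
  have hqmem : ∀ j k (N : SliceNode C y δ k), q j k N ∈ convexHull ℝ N.slice := by
    intro j
    induction j with
    | zero => exact fun k N => subset_convexHull ℝ _ N.p_mem_slice
    | succ j ih =>
      intro k N
      rw [qs]
      exact (convex_convexHull ℝ _).sum_mem (fun i _ => hw k N i) (hw1 k N)
        fun i _ => convexHull_mono (hc k N i) (ih (k + 1) (c k N i))
  have htmem : ∀ k (N : SliceNode C y δ k), t k N ∈ closure (convexHull ℝ N.slice) :=
    fun k N => mem_closure_of_tendsto (ht k N) (Filter.Eventually.of_forall fun j => hqmem j k N)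
  -- `L m` is the finite set of descendants of the root at level `m`.
  let L : (m : ℕ) → Set (SliceNode C y δ m) := fun m =>
    Nat.rec {root} (fun m l => ⋃ N ∈ l, range (c m N)) m
  have L0 : L 0 = {root} := rfl
  have Ls : ∀ m, L (m + 1) = ⋃ N ∈ L m, range (c m N) := fun _ => rfl
  have hLfin : ∀ m, (L m).Finite := by
    intro m
    induction m with
    | zero => rw [L0]; exact finite_singleton _
    | succ m ih => rw [Ls]; exact ih.biUnion fun N _ => finite_range _
  have hanc : ∀ k d, ∀ N ∈ L (k + d), ∃ N' ∈ L k, N.slice ⊆ N'.slice := by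
    intro k d
    induction d with
    | zero => exact fun N hN => ⟨N, hN, Subset.rfl⟩
    | succ d ih =>
      intro N hN
      have hN2 : N ∈ ⋃ N ∈ L (k + d), range (c (k + d) N) := hN
      simp only [mem_iUnion] at hN2
      obtain ⟨P, hP, i, rfl⟩ := hN2
      obtain ⟨N', hN', hsub⟩ := ih P hP
      exact ⟨N', hN', (hc (k + d) P i).trans hsub⟩
  refine ⟨fun m => t m '' L m, ?_, ⟨_, root, rfl, rfl⟩, ?_, ?_⟩
  · rintro m _ ⟨N, -, rfl⟩
    exact closure_minimal (convexHull_min (fun x hx => hx.1) hC) hCcl (htmem m N)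
  · rintro m _ ⟨N, hN, rfl⟩
    rw [hts]
    refine (convex_convexHull ℝ _).sum_mem (fun i _ => hw m N i) (hw1 m N)
      fun i _ => subset_convexHull ℝ _ ⟨_, ?_, rfl⟩
    rw [Ls]
    exact mem_biUnion hN (mem_range_self i)
  · intro k
    refine ⟨(fun N : SliceNode C y δ k => N.f) '' L k, (hLfin k).image _, ?_, ?_⟩
    · rintro _ ⟨N, -, rfl⟩
      exact N.norm_f
    · rintro m hkm _ ⟨N, hN, rfl⟩
      obtain ⟨d, rfl⟩ := Nat.exists_eq_add_of_le hkm
      obtain ⟨N', hN', hsub⟩ := hanc k d N hN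
      refine ⟨N'.f, ⟨N', hN', rfl⟩, ?_⟩
      have h1 : ∀ x ∈ N.slice, (-N'.f) x ≤ -(N'.f (y k) + δ) := by
        intro x hx
        have := N'.escape x (hsub hx).1 (hsub hx).2
        simp only [neg_apply]
        linarith
      have := le_on_closed_hull h1 _ (htmem _ N)
      simp only [neg_apply] at this
      linarith

end Tree

/-! ### The renorming -/

section Ball

variable {X : Type*} [NormedAddCommGroup X]

/-- The points `± t + z` with `t` in one of the levels `D m`, `n ≤ m`, and `‖z‖ ≤ r`. -/
def fattenedLevels (D : ℕ → Set X) (r : ℝ) (n : ℕ) : Set X :=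
  {x | ∃ m, n ≤ m ∧ ∃ t ∈ D m, ‖x - t‖ ≤ r ∨ ‖x + t‖ ≤ r}

lemma neg_fattenedLevels (D : ℕ → Set X) (r : ℝ) (n : ℕ) :
    -fattenedLevels D r n = fattenedLevels D r n := by
  ext x
  have h1 : ∀ t : X, ‖-x - t‖ = ‖x + t‖ := fun t => by rw [← norm_neg]; congr 1; abel
  have h2 : ∀ t : X, ‖-x + t‖ = ‖x - t‖ := fun t => by rw [← norm_neg]; congr 1; abel
  simp only [fattenedLevels, Set.mem_neg, mem_ofPred_eq, h1, h2, or_comm]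

variable [NormedSpace ℝ X]

lemma isOpen_weakTop_lt (f : X →L[ℝ] ℝ) (c : ℝ) : IsOpen[weakTop X] {x | f x < c} := by
  refine isOpen_induced_iff.2 ⟨{φ | φ f < c}, isOpen_lt (continuous_apply f) continuous_const, rfl⟩

lemma isOpen_weakTop_gt (f : X →L[ℝ] ℝ) (c : ℝ) : IsOpen[weakTop X] {x | c < f x} := by
  refine isOpen_induced_iff.2 ⟨{φ | c < φ f}, isOpen_lt continuous_const (continuous_apply f), rfl⟩

lemma fattenedLevels_subset_hull {D : ℕ → Set X} (hD : ∀ m, D m ⊆ convexHull ℝ (D (m + 1)))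
    (r : ℝ) (n : ℕ) :
    fattenedLevels D r 0 ⊆ convexHull ℝ (fattenedLevels D r n) := by
  have hD' : ∀ m d, D m ⊆ convexHull ℝ (D (m + d)) := by
    intro m d
    induction d with
    | zero => exact subset_convexHull ℝ _
    | succ d ih => exact ih.trans (convexHull_min (hD (m + d)) (convex_convexHull ℝ _))
  rintro x ⟨m, -, t, ht, hx⟩
  obtain ⟨ι, _, w, z, hw, hw1, hz, rfl⟩ := mem_convexHull_iff_exists_fintype.1 (hD' m n ht)
  rcases hx with hx | hx
  · have : x = ∑ i, w i • (z i + (x - ∑ i, w i • z i)) := by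
      simp only [smul_add, Finset.sum_add_distrib, ← Finset.sum_smul, hw1]
      module
    rw [this]
    exact (convex_convexHull ℝ _).sum_mem (fun i _ => hw i) hw1 fun i _ =>
      subset_convexHull ℝ _ ⟨m + n, by omega, z i, hz i, Or.inl (by simpa using hx)⟩
  · have : x = ∑ i, w i • (-z i + (x + ∑ i, w i • z i)) := by
      simp only [smul_add, Finset.sum_add_distrib, ← Finset.sum_smul, hw1, smul_neg,
        Finset.sum_neg_distrib]
      module
    rw [this]
    refine (convex_convexHull ℝ _).sum_mem (fun i _ => hw i) hw1 fun i _ =>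
      subset_convexHull ℝ _ ⟨m + n, by omega, z i, hz i, Or.inr ?_⟩
    have h : -z i + (x + ∑ i, w i • z i) + z i = x + ∑ i, w i • z i := by abel
    rwa [h]

open scoped Pointwise in
/-- The closed convex hull of the fattened levels has no almost preserved extreme points, provided
that the levels lie in a subspace contained in the closure of the range of `y` and that the
fattening `r` is small compared with the distance `5 * r` by which the levels escape from the
points `y k`. Every point `x₀` of the hull is within `3 * r` of some `y k`, and likewise `-x₀` is
close to some `y k'`; the finitely many functionals attached to `k` and `k'` give a weak
neighbourhood of `x₀` missed by all sufficiently late fattened levels, whose closed convex hull is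
still the whole set. -/
lemma ape_hull_eq_empty {D : ℕ → Set X} {Y : Submodule ℝ X} {y : ℕ → X} {r : ℝ} (hr : 0 < r)
    (hDY : ∀ m, D m ⊆ Y) (hy : (Y : Set X) ⊆ closure (range y))
    (hD : ∀ m, D m ⊆ convexHull ℝ (D (m + 1)))
    (hesc : ∀ k, ∃ F : Set (X →L[ℝ] ℝ), F.Finite ∧ (∀ f ∈ F, ‖f‖ ≤ 1) ∧
        ∀ m, k ≤ m → ∀ t ∈ D m, ∃ f ∈ F, f (y k) + 5 * r ≤ f t) :
    ape (closure (convexHull ℝ (fattenedLevels D r 0))) = ∅ := by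
  rw [eq_empty_iff_forall_notMem]
  rintro x₀ ⟨hx₀, hape⟩
  have hnear : ∃ s ∈ Y, ‖x₀ - s‖ < 2 * r := by
    obtain ⟨x₁, hx₁, hd⟩ := Metric.mem_closure_iff.1 hx₀ r hr
    have hsub : convexHull ℝ (fattenedLevels D r 0) ⊆ (Y : Set X) + Metric.closedBall 0 r := by
      refine convexHull_min ?_ (Y.convex.add (convex_closedBall 0 r))
      rintro x ⟨m, -, t, ht, hx | hx⟩
      · exact Set.mem_add.2 ⟨t, hDY m ht, x - t, by simpa using hx, by abel⟩
      · exact Set.mem_add.2 ⟨-t, Y.neg_mem (hDY m ht), x + t, by simpa using hx, by abel⟩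
    obtain ⟨s, hs, z, hz, rfl⟩ := Set.mem_add.1 (hsub hx₁)
    refine ⟨s, hs, ?_⟩
    rw [mem_closedBall_zero_iff] at hz
    rw [dist_eq_norm] at hd
    have h1 : x₀ - s = (x₀ - (s + z)) + z := by abel
    rw [h1]
    exact (norm_add_le _ _).trans_lt (by linarith)
  obtain ⟨s, hs, hxs⟩ := hnear
  have happrox : ∀ u ∈ Y, ∀ x, ‖x - u‖ < 2 * r → ∃ k, ‖x - y k‖ < 3 * r := by
    intro u hu x hxu
    obtain ⟨_, ⟨k, rfl⟩, hk⟩ := Metric.mem_closure_iff.1 (hy hu) r hr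
    rw [dist_eq_norm] at hk
    exact ⟨k, (norm_sub_le_norm_sub_add_norm_sub x u (y k)).trans_lt (by linarith)⟩
  obtain ⟨k, hk⟩ := happrox s hs x₀ hxs
  obtain ⟨k', hk'⟩ := happrox (-s) (Y.neg_mem hs) (-x₀) (by
    rwa [show -x₀ - -s = -(x₀ - s) by abel, norm_neg])
  obtain ⟨F, hF, hF1, hFe⟩ := hesc k
  obtain ⟨F', hF', hF1', hFe'⟩ := hesc k'
  set U : Set X := (⋂ f ∈ F, {x | f x < f x₀ + r}) ∩ ⋂ f ∈ F', {x | f x₀ - r < f x} with hU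
  have hUo : IsOpen[weakTop X] U := by
    let := weakTop X
    exact (hF.isOpen_biInter fun f _ => isOpen_weakTop_lt f _).inter
      (hF'.isOpen_biInter fun f _ => isOpen_weakTop_gt f _)
  have hxU : x₀ ∈ U := by
    refine ⟨mem_iInter₂.2 fun f _ => ?_, mem_iInter₂.2 fun f _ => ?_⟩
    · change f x₀ < f x₀ + r
      linarith
    · change f x₀ - r < f x₀
      linarith
  have hbound : ∀ f : X →L[ℝ] ℝ, ‖f‖ ≤ 1 → ∀ x b, ‖x‖ ≤ b → |f x| ≤ b := by
    intro f hf x b hx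
    refine (f.le_opNorm x).trans ?_
    nlinarith [norm_nonneg x, norm_nonneg f]
  -- All fattened points of level at least `max k k'` lie outside `U`.
  have hout : ∀ x ∈ fattenedLevels D r (max k k'), x ∉ U := by
    rintro x ⟨m, hm, t, ht, hx | hx⟩ ⟨hx1, hx2⟩
    · obtain ⟨f, hf, hft⟩ := hFe m ((le_max_left _ _).trans hm) t ht
      have h1 : f x < f x₀ + r := mem_iInter₂.1 hx1 f hf
      have h2 := abs_le.1 (hbound f (hF1 f hf) _ _ hx)
      have h3 := abs_le.1 (hbound f (hF1 f hf) _ _ hk.le)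
      rw [map_sub] at h2 h3
      linarith [h2.1, h2.2, h3.1, h3.2]
    · obtain ⟨f, hf, hft⟩ := hFe' m ((le_max_right _ _).trans hm) t ht
      have h1 : f x₀ - r < f x := mem_iInter₂.1 hx2 f hf
      have h2 := abs_le.1 (hbound f (hF1' f hf) _ _ hx)
      have h3 := abs_le.1 (hbound f (hF1' f hf) _ _ hk'.le)
      rw [map_add] at h2
      rw [map_sub, map_neg] at h3
      linarith [h2.1, h2.2, h3.1, h3.2]
  obtain ⟨g, α, -, ⟨x, hxB, hxg⟩, hsub⟩ := hape U hUo hxU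
  set B := closure (convexHull ℝ (fattenedLevels D r 0)) with hB
  have hle : ∀ x ∈ fattenedLevels D r (max k k'), g x ≤ sSup ((fun y => g y) '' B) - α := by
    intro x hx
    by_contra! hcon
    refine hout x hx (hsub ⟨subset_closure (subset_convexHull ℝ _ ?_), hcon⟩)
    obtain ⟨m, -, h⟩ := hx
    exact ⟨m, Nat.zero_le m, h⟩
  have hxB' : x ∈ closure (convexHull ℝ (fattenedLevels D r (max k k'))) :=
    closure_mono (convexHull_min (fattenedLevels_subset_hull hD r _) (convex_convexHull ℝ _)) hxB
  exact absurd (le_on_closed_hull hle x hxB') (not_le.2 hxg)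

end Ball

/-- If a real Banach space `X` fails the Radon–Nikodým property (i.e. some
nonempty bounded subset has all its nonempty slices of diameter at least `ε` for some
`ε > 0`), then there is an equivalent norm on `X` whose closed unit ball has no almost
preserved extreme points; equivalently, there is a bounded, closed, convex, symmetric subset
`B` of `X` with `0` in its norm-interior such that `ape B = ∅`. -/
theorem exists_renorming_ball_ape_empty_of_not_rnp {X : Type*} [NormedAddCommGroup X]
    [NormedSpace ℝ X] [CompleteSpace X]
    (h : ∃ A : Set X, A.Nonempty ∧ Bornology.IsBounded A ∧ ∃ ε > 0,
      ∀ (f : X →L[ℝ] ℝ) (α : ℝ), 0 < α → (sliceOf A f α).Nonempty →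
        ε ≤ Metric.diam (sliceOf A f α)) :
    ∃ B : Set X, Bornology.IsBounded B ∧ IsClosed B ∧ Convex ℝ B ∧ B = -B ∧
      0 ∈ interior B ∧ ape B = ∅ := by
  obtain ⟨A, hAne, hAb, ε, hε, hA⟩ := h
  obtain ⟨A', hA'A, hA'c, hA'ne, hA'⟩ := (nonDentable_of_diam hAb hε hA).exists_countable hAne
  set C := closure (convexHull ℝ A') with hCdef
  have hCc : Convex ℝ C := (convex_convexHull ℝ A').closure
  obtain ⟨R, hR⟩ : ∃ R, ∀ x ∈ C, ‖x‖ ≤ R :=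
    ((isBounded_convexHull.2 (hAb.subset hA'A)).closure).exists_norm_le
  -- `15 * r = 3 * (5 * r)` is the non-dentability constant of `C`.
  set r : ℝ := ε / 120 with hr
  have hr0 : 0 < r := by positivity
  have hnd : NonDentable C (3 * (5 * r)) := by
    have : 3 * (5 * r) = ε / 4 / 2 := by rw [hr]; ring
    rw [this]
    exact hA'.closedHull
  set Y := (Submodule.span ℝ A').topologicalClosure with hY
  obtain ⟨S, hSc, hS⟩ := hA'c.isSeparable.span (R := ℝ)
  have hSne : S.Nonempty := by
    rw [← closure_nonempty_iff]
    exact ⟨0, hS (Submodule.zero_mem _)⟩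
  obtain ⟨y, rfl⟩ := hSc.exists_eq_range hSne
  have hy : (Y : Set X) ⊆ closure (range y) := by
    rw [hY, Submodule.topologicalClosure_coe]
    exact closure_minimal hS isClosed_closure
  have hCY : C ⊆ Y := by
    rw [hY, Submodule.topologicalClosure_coe]
    exact closure_mono (convexHull_min Submodule.subset_span (Submodule.convex _))
  obtain ⟨D, hDC, ⟨t, ht⟩, hD, hesc⟩ := exists_levels
    ((hA'ne.convexHull (𝕜 := ℝ)).closure) hR hCc isClosed_closure (by positivity) hnd y
  refine ⟨closure (convexHull ℝ (fattenedLevels D r 0)), ?_, isClosed_closure,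
    (convex_convexHull ℝ _).closure, ?_, ?_,
    ape_hull_eq_empty hr0 (fun m => (hDC m).trans hCY) hy hD hesc⟩
  · refine (isBounded_convexHull.2 (isBounded_iff_forall_norm_le.2 ⟨R + r, ?_⟩)).closure
    rintro x ⟨m, -, u, hu, hx | hx⟩
    · linarith [norm_le_norm_sub_add x u, hR u (hDC m hu)]
    · have := norm_le_norm_sub_add x (-u)
      rw [sub_neg_eq_add, norm_neg] at this
      linarith [hR u (hDC m hu)]
  · rw [neg_closure, ← convexHull_neg, neg_fattenedLevels]
  · refine mem_interior.2 ⟨Metric.ball 0 r, ?_, Metric.isOpen_ball, Metric.mem_ball_self hr0⟩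
    intro z hz
    rw [mem_ball_zero_iff] at hz
    refine subset_closure ?_
    -- `z` is the midpoint of `z + t` and `z - t`.
    have h1 : z + t ∈ convexHull ℝ (fattenedLevels D r 0) :=
      subset_convexHull ℝ _ ⟨0, le_rfl, t, ht, Or.inl (by simpa using hz.le)⟩
    have h2 : z - t ∈ convexHull ℝ (fattenedLevels D r 0) :=
      subset_convexHull ℝ _ ⟨0, le_rfl, t, ht, Or.inr (by simpa using hz.le)⟩
    have h3 := (convex_convexHull ℝ (fattenedLevels D r 0)) h1 h2
      (show (0 : ℝ) ≤ 1 / 2 by norm_num) (show (0 : ℝ) ≤ 1 / 2 by norm_num) (by norm_num)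
    convert h3 using 1
    module
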